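/- If X ⊂ P^r is a non-degenerate variety and dim(J(X^k)) = dim(J(X^{k+1})), then J(X^k) = P^r. Similarly, if dim(S^k(X)) = dim(S^{k-1}(X)), then S^k(X) = P^r. -/

import Mathlib

open MvPolynomial Classical

noncomputable section

/-- A subset of affine space is algebraic if it is the zero locus of a set of polynomials. -/
def IsAlg {N : ℕ} (S : Set (Fin N → ℂ)) : Prop :=
  ∃ I : Set (MvPolynomial (Fin N) ℂ), S = {x | ∀ f ∈ I, eval x f = 0}

/-- Zariski closure. -/
def zcl {N : ℕ} (S : Set (Fin N → ℂ)) : Set (Fin N → ℂ) :=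
  ⋂₀ {T | IsAlg T ∧ S ⊆ T}

/-- Affine cones (over projective sets). -/
def IsCone {N : ℕ} (S : Set (Fin N → ℂ)) : Prop :=
  (0 : Fin N → ℂ) ∈ S ∧ ∀ c : ℂ, ∀ x ∈ S, c • x ∈ S

/-- Irreducible algebraic subsets. -/
def IrrAlg {N : ℕ} (S : Set (Fin N → ℂ)) : Prop :=
  IsAlg S ∧ S.Nonempty ∧ ∀ T₁ T₂ : Set (Fin N → ℂ), IsAlg T₁ → IsAlg T₂ →
    S ⊆ T₁ ∪ T₂ → (S ⊆ T₁ ∨ S ⊆ T₂)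

/-- Non-degenerate: the cone spans the ambient space. -/
def Nondeg {N : ℕ} (S : Set (Fin N → ℂ)) : Prop :=
  Submodule.span ℂ S = ⊤

/-- Projective dimension of (the projectivization of) a cone `S`,
defined as the Krull dimension of the poset of irreducible algebraic
subcones of `S` different from `{0}`. -/
noncomputable def pdim {N : ℕ} (S : Set (Fin N → ℂ)) : WithBot ℕ∞ :=
  Order.krullDim {T : Set (Fin N → ℂ) // IrrAlg T ∧ IsCone T ∧ T ≠ {0} ∧ T ⊆ S}

/-- Cast a natural number into `WithBot ℕ∞`. -/
def nn (a : ℕ) : WithBot ℕ∞ := ((a : ℕ∞) : WithBot ℕ∞)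

/-- Join of two cones. -/
def joinSet {N : ℕ} (S T : Set (Fin N → ℂ)) : Set (Fin N → ℂ) :=
  zcl {x | ∃ u ∈ S, ∃ v ∈ T, x = u + v}

/-- `secant k S` is (the cone over) the `k`-secant variety `S^k(X) = J(X^{k+1})`. -/
def secant {N : ℕ} : ℕ → Set (Fin N → ℂ) → Set (Fin N → ℂ)
  | 0, S => zcl S
  | (k+1), S => joinSet (secant k S) S

/-- Join of a finite family of cones. -/
def joinFam {N m : ℕ} (F : Fin m → Set (Fin N → ℂ)) : Set (Fin N → ℂ) :=
  zcl {x | ∃ q : Fin m → Fin N → ℂ, (∀ i, q i ∈ F i) ∧ x = ∑ i, q i}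

/-- Irreducible components. -/
def IsComponent {N : ℕ} (S T : Set (Fin N → ℂ)) : Prop :=
  IrrAlg T ∧ T ⊆ S ∧ ∀ T', IrrAlg T' → T' ⊆ S → T ⊆ T' → T = T'

/-- Union of the irreducible components of `S` through `x`. -/
def compThrough {N : ℕ} (S : Set (Fin N → ℂ)) (x : Fin N → ℂ) : Set (Fin N → ℂ) :=
  ⋃₀ {T | IsComponent S T ∧ x ∈ T}

/-- Pure (equidimensional) sets. -/
def IsPure {N : ℕ} (S : Set (Fin N → ℂ)) : Prop :=
  ∀ T T', IsComponent S T → IsComponent S T' → pdim T = pdim T'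

/-- Secant variety in the convention for possibly reducible varieties:
union of the joins of `k+1` distinct irreducible components (and the usual
secant variety in the irreducible case). -/
def SecantD {N : ℕ} (k : ℕ) (Y : Set (Fin N → ℂ)) : Set (Fin N → ℂ) :=
  (⋃₀ {J | ∃ T : Fin (k+1) → Set (Fin N → ℂ),
      (∀ i, IsComponent Y (T i)) ∧ Function.Injective T ∧ J = joinFam T})
  ∪ {x | IrrAlg Y ∧ x ∈ secant k Y}

/-- The (cone over the) embedded tangent space at `x`: directions annihilated by the
differentials at `x` of all polynomials vanishing on `S`. -/
def embTangent {N : ℕ} (S : Set (Fin N → ℂ)) (x : Fin N → ℂ) : Set (Fin N → ℂ) :=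
  {v | ∀ f : MvPolynomial (Fin N) ℂ, (∀ y ∈ S, eval y f = 0) →
      ∑ i, v i * eval x (pderiv i f) = 0}

def tanSpan {N : ℕ} (S : Set (Fin N → ℂ)) (x : Fin N → ℂ) : Submodule ℂ (Fin N → ℂ) :=
  Submodule.span ℂ (embTangent S x)

/-- `x` is a smooth point of the `n`-dimensional projective variety with cone `S`. -/
def IsSmoothAt {N : ℕ} (S : Set (Fin N → ℂ)) (n : ℕ) (x : Fin N → ℂ) : Prop :=
  Module.finrank ℂ (tanSpan S x) = n + 1

/-- Algebraic subsets of tuple spaces. -/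
def IsAlgT {N m : ℕ} (S : Set (Fin m → Fin N → ℂ)) : Prop :=
  ∃ I : Set (MvPolynomial (Fin m × Fin N) ℂ),
    S = {q | ∀ f ∈ I, eval (fun p => q p.1 p.2) f = 0}

/-- `P` holds for general (tuples of) points of `X`. -/
def Generically {N : ℕ} (m : ℕ) (X : Set (Fin N → ℂ))
    (P : (Fin m → Fin N → ℂ) → Prop) : Prop :=
  ∃ B : Set (Fin m → Fin N → ℂ), IsAlgT B ∧ ¬ ({q | ∀ i, q i ∈ X} ⊆ B) ∧
    ∀ q : Fin m → Fin N → ℂ, (∀ i, q i ∈ X ∧ q i ≠ 0) → q ∉ B → P q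

/-- `P` holds for general points of the set `S`. -/
def GenericallyOn {N : ℕ} (S : Set (Fin N → ℂ)) (P : (Fin N → ℂ) → Prop) : Prop :=
  ∃ B : Set (Fin N → ℂ), IsAlg B ∧ ¬ (S ⊆ B) ∧ ∀ x ∈ S, x ∉ B → x ≠ 0 → P x

/-- `L` is `J_k`-tangent to `X` along `Y`: for every analytic arc of a point of `X`
and `s ≤ k` points of `Y`, linearly independent off `0`, with the `X`-point off `L`
for `t ≠ 0` and on `L` at `t = 0`, the flat limit of the spanned `s`-space
(described through analytic selections of vectors) lies in `L`. -/
def JkTangent {N : ℕ} (k : ℕ) (X Y : Set (Fin N → ℂ))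
    (L : Submodule ℂ (Fin N → ℂ)) : Prop :=
  ∀ s : ℕ, 1 ≤ s → s ≤ k → ∀ q : Fin (s+1) → ℂ → (Fin N → ℂ), ∀ ε : ℝ, 0 < ε →
    (∀ i, AnalyticOnNhd ℂ (q i) (Metric.ball 0 ε)) →
    (∀ t ∈ Metric.ball (0:ℂ) ε, q 0 t ∈ X) →
    (∀ i : Fin (s+1), i ≠ 0 → ∀ t ∈ Metric.ball (0:ℂ) ε, q i t ∈ Y) →
    (∀ t ∈ Metric.ball (0:ℂ) ε, t ≠ 0 → LinearIndependent ℂ (fun i => q i t)) →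
    (∀ t ∈ Metric.ball (0:ℂ) ε, t ≠ 0 → q 0 t ∉ L) →
    q 0 0 ∈ L →
    ∀ w : ℂ → (Fin N → ℂ), AnalyticOnNhd ℂ w (Metric.ball 0 ε) →
      (∀ t ∈ Metric.ball (0:ℂ) ε, t ≠ 0 →
        w t ∈ Submodule.span ℂ (Set.range (fun i => q i t))) →
      w 0 ∈ L

/-- `X` is `k`-smooth along `Y`: it is smooth along `Y` and any arc-limit
scheme of `m ≤ k+1` points of `X` supported on `Y` spans the right dimension,
i.e. pairwise non-proportional arcs of points stay linearly independent. -/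
def KSmoothAlong {N : ℕ} (k n : ℕ) (X Y : Set (Fin N → ℂ)) : Prop :=
  (∀ y ∈ Y, y ≠ 0 → IsSmoothAt X n y) ∧
  ∀ m : ℕ, 2 ≤ m → m ≤ k + 1 → ∀ q : Fin m → ℂ → (Fin N → ℂ), ∀ ε : ℝ, 0 < ε →
    (∀ i, AnalyticOnNhd ℂ (q i) (Metric.ball 0 ε)) →
    (∀ i, ∀ t ∈ Metric.ball (0:ℂ) ε, q i t ∈ X) →
    (∀ i, q i 0 ∈ Y ∧ q i 0 ≠ 0) →
    (∀ t ∈ Metric.ball (0:ℂ) ε, t ≠ 0 → ∀ i j : Fin m, i ≠ j →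
        ∀ c : ℂ, q i t ≠ c • q j t) →
    ∀ t ∈ Metric.ball (0:ℂ) ε, t ≠ 0 → LinearIndependent ℂ (fun i => q i t)

def KSmooth {N : ℕ} (k n : ℕ) (X : Set (Fin N → ℂ)) : Prop := KSmoothAlong k n X X

/-- The hyperplane with coefficient vector `c`. -/
def hypSub {N : ℕ} (c : Fin N → ℂ) : Submodule ℂ (Fin N → ℂ) :=
  LinearMap.ker (Finset.univ.sum fun i => c i • (LinearMap.proj i : (Fin N → ℂ) →ₗ[ℂ] ℂ))

/-- The hyperplane with coefficients `c` is tangent to `X` at the points `p j`. -/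
def TangentHypAt {N m : ℕ} (X : Set (Fin N → ℂ)) (p : Fin m → Fin N → ℂ)
    (c : Fin N → ℂ) : Prop :=
  c ≠ 0 ∧ ∀ j, embTangent X (p j) ⊆ ↑(hypSub c)

/-- The tangential contact locus `Γ_{p_0,…,p_m}`: union of the irreducible components,
through the points `p j`, of the closure of the locus of smooth points whose tangent
space lies in the span of the tangent spaces at the `p j` (`= T_{S^m(X),x}` by Terracini). -/
def GammaLocus {N m : ℕ} (X : Set (Fin N → ℂ)) (n : ℕ)
    (p : Fin m → Fin N → ℂ) : Set (Fin N → ℂ) :=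
  ⋃₀ {T | IsComponent (zcl {q | q ∈ X ∧ q ≠ 0 ∧ IsSmoothAt X n q ∧
      embTangent X q ⊆ ↑(Submodule.span ℂ (⋃ j, embTangent X (p j)))}) T ∧ ∃ j, p j ∈ T}

/-- The projection contact locus `Ψ_{p_0,…,p_j}`: the component through `p 0` of the
fibre through `p 0` of the tangential projection from `T_{X,p_1,…,p_j}`. -/
def PsiLocus {N j : ℕ} (X : Set (Fin N → ℂ))
    (p : Fin (j+1) → Fin N → ℂ) : Set (Fin N → ℂ) :=
  compThrough (X ∩ ↑(Submodule.span ℂ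
    ((⋃ i : Fin j, embTangent X (p i.succ)) ∪ {p 0}))) (p 0)

/-- `X` is an `R_k`-variety: for `1 ≤ i ≤ k` and general points `p_0,…,p_i`, the
general hyperplane tangent to `X` at these points is `J_i`-tangent to `X` along the
tangential `i`-contact locus. -/
def RkVariety {N : ℕ} (k n : ℕ) (X : Set (Fin N → ℂ)) : Prop :=
  ∀ i : ℕ, 1 ≤ i → i ≤ k →
    Generically (i+1) X fun p =>
      ∃ B : Set (Fin N → ℂ), IsAlg B ∧ ¬ ({c | TangentHypAt X p c} ⊆ B) ∧
        ∀ c, TangentHypAt X p c → c ∉ B → JkTangent i X (GammaLocus X n p) (hypSub c)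

/-- The entry locus of `x` with respect to the `k`-secant variety of `X`. -/
def EntryLocus {N : ℕ} (k : ℕ) (X : Set (Fin N → ℂ)) (x : Fin N → ℂ) :
    Set (Fin N → ℂ) :=
  zcl {z | z ∈ X ∧ z ≠ 0 ∧ ∃ x' ∈ secant (k-1) X, x' ∉ Submodule.span ℂ {z} ∧
      x ∈ Submodule.span ℂ ({z, x'} : Set (Fin N → ℂ))}

/-- `k`-Severi varieties: irreducible, non-degenerate `R_k`-varieties of dimension `n`
with `dim S^k(X) < r` and `dim S^k(X) = (k+2)n/2 + k`. -/
def KSeveri {N : ℕ} (k n : ℕ) (X : Set (Fin N → ℂ)) : Prop :=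
  IrrAlg X ∧ IsCone X ∧ X ≠ {0} ∧ Nondeg X ∧ pdim X = nn n ∧
  RkVariety k n X ∧
  pdim (secant k X) < pdim (Set.univ : Set (Fin N → ℂ)) ∧
  pdim (secant k X) + pdim (secant k X) = nn ((k+2)*n + 2*k)

/-!
A longest chain of irreducible subcones of `S` ends in a cone `Z` which, if `J(S, X)` has no larger
dimension than `S`, is maximal among the irreducible subcones of `J(S, X)` as well. For `x ∈ X` the
join of `Z` with the line `ℂx` is an irreducible subcone of `J(S, X)` containing `Z`, hence equal to
`Z`; that is, `x` lies in the vertex of `Z`. The vertex is a linear subspace contained in `Z`, so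
the whole linear span of `X` lies in `Z ⊆ S`.
-/

open scoped Pointwise

section Order

variable {α β : Type*} [Preorder α] [Preorder β]

theorem exists_isMax_apply_of_krullDim_le [FiniteDimensionalOrder α] {f : α → β}
    (hf : StrictMono f) (h : Order.krullDim β ≤ Order.krullDim α) : ∃ a, IsMax (f a) := by
  let p := LTSeries.longestOf α
  refine ⟨p.last, isMax_iff_forall_not_lt.2 fun b hb => ?_⟩
  let q : LTSeries β := (p.map f hf).snoc b (by simpa using hb)
  have hq : (q.length : WithBot ℕ∞) ≤ p.length :=
    (Order.LTSeries.length_le_krullDim q).trans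
      (h.trans_eq Order.krullDim_eq_length_of_finiteDimensionalOrder)
  have hq' : p.length + 1 ≤ p.length := by exact_mod_cast hq
  omega

end Order

section Zariski

variable {M N : ℕ} {S T : Set (Fin N → ℂ)}

theorem isAlg_zeroLocus (I : Ideal (MvPolynomial (Fin N) ℂ)) : IsAlg (zeroLocus ℂ I) :=
  ⟨I, by simp [zeroLocus]⟩

theorem isAlg_setOf_eval_eq_zero (f : MvPolynomial (Fin N) ℂ) : IsAlg {x | eval x f = 0} :=
  ⟨{f}, by simp⟩

theorem IsAlg.zeroLocus_vanishingIdeal (hS : IsAlg S) : zeroLocus ℂ (vanishingIdeal ℂ S) = S := by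
  obtain ⟨I, rfl⟩ := hS
  refine (zeroLocus_vanishingIdeal_le _).antisymm' fun x hx f hf => ?_
  simpa using hx f fun y hy => by simpa using hy f hf

theorem IsAlg.subset_of_vanishingIdeal_le (hT : IsAlg T)
    (h : vanishingIdeal ℂ T ≤ vanishingIdeal ℂ S) : S ⊆ T :=
  hT.zeroLocus_vanishingIdeal ▸ le_zeroLocus_iff_le_vanishingIdeal.2 h

theorem IsAlg.iInter {ι : Sort*} {T : ι → Set (Fin N → ℂ)} (hT : ∀ i, IsAlg (T i)) :
    IsAlg (⋂ i, T i) := by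
  choose I hI using hT
  refine ⟨⋃ i, I i, Set.ext fun x => ?_⟩
  simp only [hI, Set.mem_iInter, Set.mem_iUnion, Set.mem_ofPred_eq, forall_exists_index]
  exact forall_comm

theorem IsAlg.preimage_of_eval_eq (hT : IsAlg T) {φ : (Fin M → ℂ) → Fin N → ℂ}
    (g : Fin N → MvPolynomial (Fin M) ℂ) (hφ : ∀ y i, eval y (g i) = φ y i) :
    IsAlg (φ ⁻¹' T) := by
  obtain ⟨I, rfl⟩ := hT
  refine ⟨bind₁ g '' I, Set.ext fun y => ?_⟩
  have eval_bind₁ (f : MvPolynomial (Fin N) ℂ) : eval y (bind₁ g f) = eval (φ y) f := by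
    simpa [hφ] using aeval_bind₁ (R := ℂ) y g f
  simp only [Set.mem_preimage, Set.mem_ofPred_eq, Set.forall_mem_image, eval_bind₁]

theorem IsAlg.preimage_add_right (hT : IsAlg T) (v : Fin N → ℂ) : IsAlg ((· + v) ⁻¹' T) :=
  hT.preimage_of_eval_eq (fun i => X i + C (v i)) (by simp)

theorem IsAlg.preimage_add_left (hT : IsAlg T) (v : Fin N → ℂ) : IsAlg ((v + ·) ⁻¹' T) := by
  simpa only [add_comm v] using hT.preimage_add_right v

theorem IsAlg.preimage_smul (hT : IsAlg T) (c : ℂ) : IsAlg ((c • ·) ⁻¹' T) :=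
  hT.preimage_of_eval_eq (fun i => C c * X i) (by simp)

theorem subset_zcl (S : Set (Fin N → ℂ)) : S ⊆ zcl S :=
  fun _ hx _ hT => hT.2 hx

theorem zcl_subset_iff (hT : IsAlg T) : zcl S ⊆ T ↔ S ⊆ T :=
  ⟨(subset_zcl S).trans, fun h => Set.sInter_subset_of_mem ⟨hT, h⟩⟩

theorem zcl_eq_zeroLocus_vanishingIdeal (S : Set (Fin N → ℂ)) :
    zcl S = zeroLocus ℂ (vanishingIdeal ℂ S) := by
  refine ((zcl_subset_iff (isAlg_zeroLocus _)).2 (zeroLocus_vanishingIdeal_le S)).antisymm ?_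
  rintro x hx T ⟨hT, hST⟩
  exact hT.zeroLocus_vanishingIdeal ▸ zeroLocus_anti_mono (vanishingIdeal_anti_mono hST) hx

theorem isAlg_zcl (S : Set (Fin N → ℂ)) : IsAlg (zcl S) :=
  zcl_eq_zeroLocus_vanishingIdeal S ▸ isAlg_zeroLocus _

theorem zcl_mono (h : S ⊆ T) : zcl S ⊆ zcl T :=
  (zcl_subset_iff (isAlg_zcl T)).2 (h.trans (subset_zcl T))

end Zariski

section Irreducible

variable {N : ℕ} {S T : Set (Fin N → ℂ)}

/-- Irreducibility of a subset of affine space in the Zariski topology. Unlike `IrrAlg` it does not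
ask for the subset to be closed, so that it applies to a sum of sets before taking the closure. -/
def ZariskiIrreducible (S : Set (Fin N → ℂ)) : Prop :=
  S.Nonempty ∧ ∀ T₁ T₂ : Set (Fin N → ℂ), IsAlg T₁ → IsAlg T₂ →
    S ⊆ T₁ ∪ T₂ → (S ⊆ T₁ ∨ S ⊆ T₂)

theorem IrrAlg.zariskiIrreducible (hS : IrrAlg S) : ZariskiIrreducible S :=
  hS.2

theorem ZariskiIrreducible.irrAlg_zcl (hS : ZariskiIrreducible S) : IrrAlg (zcl S) := by
  refine ⟨isAlg_zcl S, hS.1.mono (subset_zcl S), fun T₁ T₂ h₁ h₂ h => ?_⟩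
  rw [zcl_subset_iff h₁, zcl_subset_iff h₂]
  exact hS.2 T₁ T₂ h₁ h₂ ((subset_zcl S).trans h)

theorem ZariskiIrreducible.add (hS : ZariskiIrreducible S) (hT : ZariskiIrreducible T) :
    ZariskiIrreducible (S + T) := by
  refine ⟨hS.1.add hT.1, fun T₁ T₂ h₁ h₂ h => ?_⟩
  have isAlg_translates {A : Set (Fin N → ℂ)} (hA : IsAlg A) : IsAlg (⋂ v : T, (· + v.1) ⁻¹' A) :=
    IsAlg.iInter fun v => hA.preimage_add_right v
  have translate_subset (u : Fin N → ℂ) (hu : u ∈ S) :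
      T ⊆ (u + ·) ⁻¹' T₁ ∨ T ⊆ (u + ·) ⁻¹' T₂ :=
    hT.2 _ _ (h₁.preimage_add_left u) (h₂.preimage_add_left u) fun v hv =>
      h (Set.add_mem_add hu hv)
  have add_subset {A : Set (Fin N → ℂ)} (hA : S ⊆ ⋂ v : T, (· + v.1) ⁻¹' A) : S + T ⊆ A :=
    Set.add_subset_iff.2 fun u hu v hv => Set.mem_iInter.1 (hA hu) ⟨v, hv⟩
  refine (hS.2 _ _ (isAlg_translates h₁) (isAlg_translates h₂) fun u hu => ?_).imp
    add_subset add_subset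
  simpa [Set.subset_def] using translate_subset u hu

theorem zariskiIrreducible_range_polynomial_eval (γ : Fin N → Polynomial ℂ) :
    ZariskiIrreducible (Set.range fun t i => (γ i).eval t) := by
  refine ⟨Set.range_nonempty _, ?_⟩
  rintro _ _ ⟨I₁, rfl⟩ ⟨I₂, rfl⟩ h
  simp only [Set.range_subset_iff, Set.mem_union, Set.mem_ofPred_eq] at h ⊢
  have eval_aeval (f : MvPolynomial (Fin N) ℂ) (t : ℂ) :
      (aeval γ f).eval t = eval (fun i => (γ i).eval t) f := by
    simpa using comp_aeval_apply (R := ℂ) γ (Polynomial.aeval t) f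
  by_contra! ⟨⟨a, f, hf, hfa⟩, b, g, hg, hgb⟩
  have hfg : aeval γ f * aeval γ g = 0 := Polynomial.funext fun t => by
    rw [Polynomial.eval_mul, eval_aeval, eval_aeval, Polynomial.eval_zero, mul_eq_zero]
    exact (h t).imp (· f hf) (· g hg)
  rcases mul_eq_zero.1 hfg with h0 | h0
  · exact hfa (by rw [← eval_aeval, h0, Polynomial.eval_zero])
  · exact hgb (by rw [← eval_aeval, h0, Polynomial.eval_zero])

theorem zariskiIrreducible_submodule (L : Submodule ℂ (Fin N → ℂ)) :
    ZariskiIrreducible (L : Set (Fin N → ℂ)) := by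
  refine ⟨L.nonempty, fun T₁ T₂ h₁ h₂ h => ?_⟩
  by_contra! hcon
  obtain ⟨⟨a, ha, ha₁⟩, b, hb, hb₂⟩ := hcon.imp Set.not_subset.1 Set.not_subset.1
  let γ (i : Fin N) : Polynomial ℂ := Polynomial.C (a i) + Polynomial.X * Polynomial.C (b i - a i)
  have eval_γ (t : ℂ) : (fun i => (γ i).eval t) = a + t • (b - a) := by
    ext i
    simp [γ]
  have line_subset : Set.range (fun t i => (γ i).eval t) ⊆ T₁ ∪ T₂ := by
    simp only [eval_γ, Set.range_subset_iff]
    exact fun t => h (L.add_mem ha (L.smul_mem t (L.sub_mem hb ha)))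
  rcases (zariskiIrreducible_range_polynomial_eval γ).2 T₁ T₂ h₁ h₂ line_subset with h' | h'
  · exact ha₁ (h' ⟨0, by simp [eval_γ]⟩)
  · exact hb₂ (h' ⟨1, by simp [eval_γ]⟩)

theorem IrrAlg.isPrime_vanishingIdeal (hS : IrrAlg S) : (vanishingIdeal ℂ S).IsPrime := by
  refine ⟨(Ideal.ne_top_iff_one _).2 fun h => ?_, fun {f g} hfg => ?_⟩
  · obtain ⟨x, hx⟩ := hS.2.1
    simpa using h x hx
  · simpa [Set.subset_def] using hS.2.2 _ _ (isAlg_setOf_eval_eq_zero f)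
      (isAlg_setOf_eval_eq_zero g) fun x hx => by simpa using hfg x hx

end Irreducible

section Cone

variable {N : ℕ} {S S' T T' : Set (Fin N → ℂ)}

theorem isCone_submodule (L : Submodule ℂ (Fin N → ℂ)) : IsCone (L : Set (Fin N → ℂ)) :=
  ⟨L.zero_mem, fun c _ hx => L.smul_mem c hx⟩

theorem IsCone.zcl (hS : IsCone S) : IsCone (zcl S) := by
  refine ⟨subset_zcl S hS.1, fun c => ?_⟩
  exact (zcl_subset_iff ((isAlg_zcl S).preimage_smul c)).2 fun x hx => subset_zcl S (hS.2 c x hx)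

theorem IsCone.add (hS : IsCone S) (hT : IsCone T) : IsCone (S + T) := by
  refine ⟨⟨0, hS.1, 0, hT.1, add_zero 0⟩, ?_⟩
  rintro c _ ⟨u, hu, v, hv, rfl⟩
  exact ⟨c • u, hS.2 c u hu, c • v, hT.2 c v hv, (smul_add c u v).symm⟩

/-- The vertex of a cone `S`: the linear subspace of all directions along which `S` is invariant
under translation. -/
def IsCone.vertex (hS : IsCone S) : Submodule ℂ (Fin N → ℂ) where
  carrier := {v | ∀ z ∈ S, z + v ∈ S}
  zero_mem' := by simp
  add_mem' hu hv z hz := add_assoc z _ _ ▸ hv _ (hu z hz)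
  smul_mem' c v hv z hz := by
    rcases eq_or_ne c 0 with rfl | hc
    · simpa using hz
    · simpa [smul_smul, hc] using hS.2 c _ (hv _ (hS.2 c⁻¹ z hz))

theorem IsCone.vertex_subset (hS : IsCone S) : (hS.vertex : Set (Fin N → ℂ)) ⊆ S :=
  fun v hv => zero_add v ▸ hv 0 hS.1

theorem joinSet_eq_zcl_add (S T : Set (Fin N → ℂ)) : joinSet S T = zcl (S + T) := by
  simp only [joinSet, ← Set.image2_add, Set.image2, eq_comm]

theorem isAlg_joinSet (S T : Set (Fin N → ℂ)) : IsAlg (joinSet S T) :=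
  isAlg_zcl _

theorem add_mem_joinSet {u v : Fin N → ℂ} (hu : u ∈ S) (hv : v ∈ T) : u + v ∈ joinSet S T :=
  subset_zcl _ ⟨u, hu, v, hv, rfl⟩

theorem joinSet_mono (hS : S ⊆ S') (hT : T ⊆ T') : joinSet S T ⊆ joinSet S' T' := by
  simpa only [joinSet_eq_zcl_add] using zcl_mono (Set.add_subset_add hS hT)

theorem subset_joinSet_left (hT : 0 ∈ T) : S ⊆ joinSet S T :=
  fun u hu => add_zero u ▸ add_mem_joinSet hu hT

theorem subset_joinSet_right (hS : 0 ∈ S) : T ⊆ joinSet S T :=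
  fun v hv => zero_add v ▸ add_mem_joinSet hS hv

theorem IsCone.joinSet (hS : IsCone S) (hT : IsCone T) : IsCone (joinSet S T) :=
  joinSet_eq_zcl_add S T ▸ (hS.add hT).zcl

theorem ZariskiIrreducible.irrAlg_joinSet (hS : ZariskiIrreducible S) (hT : ZariskiIrreducible T) :
    IrrAlg (joinSet S T) :=
  joinSet_eq_zcl_add S T ▸ (hS.add hT).irrAlg_zcl

theorem IsCone.span_singleton_subset (hS : IsCone S) {x : Fin N → ℂ} (hx : x ∈ S) :
    (Submodule.span ℂ {x} : Set (Fin N → ℂ)) ⊆ S := by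
  intro y hy
  obtain ⟨c, rfl⟩ := Submodule.mem_span_singleton.1 hy
  exact hS.2 c x hx

end Cone

section Dimension

variable {N : ℕ} {S S' : Set (Fin N → ℂ)}

/-- The irreducible closed subcones of `S` other than `{0}`, that is, the nonempty irreducible
closed subsets of the projectivization of `S`. `pdim S` is by definition their Krull dimension. -/
abbrev IrrSubcone (S : Set (Fin N → ℂ)) : Type :=
  {T : Set (Fin N → ℂ) // IrrAlg T ∧ IsCone T ∧ T ≠ {0} ∧ T ⊆ S}

theorem pdim_le (S : Set (Fin N → ℂ)) : pdim S ≤ N := by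
  have hdim : ringKrullDim (MvPolynomial (Fin N) ℂ) = N := by
    simp [MvPolynomial.ringKrullDim_of_isNoetherianRing]
  rw [← hdim, ringKrullDim, ← Order.krullDim_orderDual]
  let I (T : IrrSubcone S) : PrimeSpectrum (MvPolynomial (Fin N) ℂ) :=
    ⟨vanishingIdeal ℂ T.1, T.2.1.isPrime_vanishingIdeal⟩
  refine Order.krullDim_le_of_strictMono (fun T => OrderDual.toDual (I T)) fun T T' hlt => ?_
  exact lt_of_le_not_ge (vanishingIdeal_anti_mono hlt.le) fun h =>
    hlt.not_ge (T.2.1.1.subset_of_vanishingIdeal_le h)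

theorem finiteDimensionalOrder_irrSubcone (h : pdim S ≠ ⊥) :
    FiniteDimensionalOrder (IrrSubcone S) :=
  Order.finiteDimensionalOrder_iff_krullDim_ne_bot_and_top.2
    ⟨h, ((pdim_le S).trans_lt (WithBot.coe_lt_coe.2 (ENat.natCast_lt_top N))).ne⟩

theorem pdim_ne_bot_of_submodule_subset (hS : IsAlg S) {L : Submodule ℂ (Fin N → ℂ)}
    (hL : L ≠ ⊥) (hLS : (L : Set (Fin N → ℂ)) ⊆ S) : pdim S ≠ ⊥ := by
  have hL0 : zcl (L : Set (Fin N → ℂ)) ≠ {0} := fun h =>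
    hL ((Submodule.eq_bot_iff L).2 fun x hx => h.subset (subset_zcl _ hx))
  exact Order.krullDim_ne_bot_iff.2 ⟨⟨zcl L, (zariskiIrreducible_submodule L).irrAlg_zcl,
    (isCone_submodule L).zcl, hL0, (zcl_subset_iff hS).2 hLS⟩⟩

theorem exists_irrSubcone_maximal_of_pdim_le (hSS' : S ⊆ S') (hbot : pdim S ≠ ⊥)
    (h : pdim S' ≤ pdim S) :
    ∃ Z : IrrSubcone S, ∀ W, IrrAlg W → IsCone W → W ⊆ S' → Z.1 ⊆ W → W ⊆ Z.1 := by
  have := finiteDimensionalOrder_irrSubcone hbot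
  let f (T : IrrSubcone S) : IrrSubcone S' :=
    ⟨T.1, T.2.1, T.2.2.1, T.2.2.2.1, T.2.2.2.2.trans hSS'⟩
  obtain ⟨Z, hZ⟩ := exists_isMax_apply_of_krullDim_le (f := f) (fun _ _ hlt => hlt) h
  refine ⟨Z, fun W hW hWc hWS' hZW => ?_⟩
  have hW0 : W ≠ {0} := by
    rintro rfl
    exact Z.2.2.2.1 (hZW.antisymm (Set.singleton_subset_iff.2 Z.2.2.1.1))
  exact hZ (b := ⟨W, hW, hWc, hW0, hWS'⟩) hZW

end Dimension

section Secant

variable {N : ℕ} {S X : Set (Fin N → ℂ)}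

theorem span_subset_of_pdim_joinSet_le (h0 : 0 ∈ S) (hX : IsCone X)
    (h : pdim (joinSet S X) ≤ pdim S) : (Submodule.span ℂ X : Set (Fin N → ℂ)) ⊆ S := by
  by_cases hX0 : Submodule.span ℂ X = ⊥
  · simpa [hX0] using h0
  obtain ⟨x₀, hx₀, hx₀0⟩ : ∃ x ∈ X, x ≠ 0 := by simpa [Submodule.span_eq_bot] using hX0
  have hbot : pdim S ≠ ⊥ := ne_bot_of_le_ne_bot (pdim_ne_bot_of_submodule_subset
    (isAlg_joinSet S X) (mt Submodule.span_singleton_eq_bot.1 hx₀0)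
    ((hX.span_singleton_subset hx₀).trans (subset_joinSet_right h0))) h
  obtain ⟨⟨Z, hZirr, hZcone, _, hZS⟩, hZmax⟩ :=
    exists_irrSubcone_maximal_of_pdim_le (subset_joinSet_left hX.1) hbot h
  have join_line_subset (x : Fin N → ℂ) (hx : x ∈ X) : joinSet Z (Submodule.span ℂ {x}) ⊆ Z :=
    hZmax _ (hZirr.zariskiIrreducible.irrAlg_joinSet (zariskiIrreducible_submodule _))
      (hZcone.joinSet (isCone_submodule _))
      (joinSet_mono hZS (hX.span_singleton_subset hx))
      (subset_joinSet_left (Submodule.zero_mem _))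
  have subset_vertex : X ⊆ hZcone.vertex := fun x hx z hz =>
    join_line_subset x hx (add_mem_joinSet hz (Submodule.mem_span_singleton_self x))
  have span_le_vertex : Submodule.span ℂ X ≤ hZcone.vertex := Submodule.span_le.2 subset_vertex
  exact fun v hv => hZS (hZcone.vertex_subset (span_le_vertex hv))

theorem secant_subset_secant_succ (k : ℕ) (h0 : 0 ∈ X) : secant k X ⊆ secant (k + 1) X :=
  subset_joinSet_left h0

theorem zero_mem_secant (k : ℕ) (h0 : 0 ∈ X) : 0 ∈ secant k X := by
  induction k with
  | zero => exact subset_zcl X h0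
  | succ k ih => exact secant_subset_secant_succ k h0 ih

theorem secant_dim_stabilizes_fills_general (k : ℕ) (hX : IsCone X) (hnd : Nondeg X)
    (h : pdim (secant (k + 1) X) ≤ pdim (secant k X)) : secant k X = Set.univ := by
  have span_subset := span_subset_of_pdim_joinSet_le (zero_mem_secant k hX.1) hX h
  rwa [show Submodule.span ℂ X = ⊤ from hnd, Submodule.top_coe, Set.univ_subset_iff] at span_subset

end Secant

/-- if `dim J(X^k) = dim J(X^{k+1})` then `J(X^k) = ℙ^r`
(recall `J(X^k) = S^{k-1}(X)`); similarly if `dim S^k(X) = dim S^{k-1}(X)`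
then `S^k(X) = ℙ^r`. -/
theorem secant_dim_stabilizes_fills (r k : ℕ) (hk : 1 ≤ k)
    (X : Set (Fin (r+1) → ℂ))
    (hX : IsAlg X) (hc : IsCone X) (hne : X ≠ {0}) (hnd : Nondeg X) :
    (pdim (secant (k-1) X) = pdim (secant k X) → secant (k-1) X = Set.univ) ∧
    (pdim (secant k X) = pdim (secant (k-1) X) → secant k X = Set.univ) := by
  obtain ⟨m, rfl⟩ := Nat.exists_eq_add_of_le' hk
  have fills := secant_dim_stabilizes_fills_general m hc hnd
  exact ⟨fun h => fills h.ge,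
    fun h => Set.univ_subset_iff.1 (fills h.le ▸ secant_subset_secant_succ m hc.1)⟩
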